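/- Let f : ℝ^n → ℝ be a multilinear polynomial of degree at most d, i.e., f(z_1,…,z_n) = ∑_{S ⊆ {1,…,n}, |S| ≤ d} c_S · ∏_{i∈S} z_i for real coefficients c_S. Let Z_1,…,Z_n be independent random variables each distributed according to 𝒵. Then E[f(Z_1,…,Z_n)⁴] ≤ 81^d · (E[f(Z_1,…,Z_n)²])². -/

import Mathlib

open MeasureTheory Finset

noncomputable section

/-- The distribution `𝒵` on `ℝ`: takes value `3` with probability `1/4` and value `-1`
with probability `3/4`. -/
def Zdist : Measure ℝ := (4⁻¹ : ENNReal) • Measure.dirac 3 + ((3 : ENNReal) / 4) • Measure.dirac (-1)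

/-!
Single out one variable: a multilinear polynomial in `X_i` and further variables is `g + X_i h`,
with `g` and `h` independent of `X_i` and `h` of degree one less. Since `E[X_i] = 0`,
`E[(g + X_i h)²] = E[g²] + E[X_i²] E[h²]`. In the expansion of `(g + X_i h)⁴` the term linear
in `X_i` has mean zero, and the odd term `4 X_i³ g h³` is absorbed by AM-GM into its two
neighbours. The mixed term `E[g² h²]` is then controlled by Cauchy–Schwarz and induction: the lower
degree of `h` gains a factor `√K ≥ 4` there, and a factor `K` in the term `E[X_i⁴] E[h⁴]`.
-/

section MomentInequalities

open ProbabilityTheory ENNReal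

variable {Ω : Type*} [MeasurableSpace Ω] {μ : Measure Ω} {f g h X Y : Ω → ℝ}

lemma sq_integral_mul_le_integral_sq_mul_integral_sq (hf : MemLp f 2 μ) (hg : MemLp g 2 μ) :
    (∫ ω, f ω * g ω ∂μ) ^ 2 ≤ (∫ ω, f ω ^ 2 ∂μ) * ∫ ω, g ω ^ 2 ∂μ := by
  have inner_toLp {u v : Ω → ℝ} (hu : MemLp u 2 μ) (hv : MemLp v 2 μ) :
      inner ℝ (hu.toLp u) (hv.toLp v) = ∫ ω, u ω * v ω ∂μ := by
    rw [L2.inner_def]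
    refine integral_congr_ae ?_
    filter_upwards [hu.coeFn_toLp, hv.coeFn_toLp] with ω hω hω'
    simp [hω, hω', mul_comm]
  simpa only [inner_toLp, ← sq] using real_inner_mul_inner_self_le (hf.toLp f) (hg.toLp g)

lemma integrable_pow_mul_pow [IsFiniteMeasure μ] {n a b : ℕ} (hf : MemLp f n μ)
    (hg : MemLp g n μ) (hab : a + b ≤ n) : Integrable (fun ω ↦ f ω ^ a * g ω ^ b) μ := by
  have hab' : ((a + b : ℕ) : ℝ≥0∞) ≤ n := mod_cast hab
  refine ((hf.mono_exponent hab').integrable_norm_pow'.add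
    (hg.mono_exponent hab').integrable_norm_pow').mono'
    ((hf.1.pow a).mul (hg.1.pow b)) (.of_forall fun ω ↦ ?_)
  simp only [norm_mul, norm_pow, Pi.add_apply]
  calc ‖f ω‖ ^ a * ‖g ω‖ ^ b
    _ ≤ max ‖f ω‖ ‖g ω‖ ^ a * max ‖f ω‖ ‖g ω‖ ^ b := by gcongr <;> simp
    _ = max ‖f ω‖ ‖g ω‖ ^ (a + b) := (pow_add ..).symm
    _ ≤ ‖f ω‖ ^ (a + b) + ‖g ω‖ ^ (a + b) := by
      rcases max_choice ‖f ω‖ ‖g ω‖ with hmax | hmax <;> rw [hmax] <;> simp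

lemma memLp_two_sq_of_memLp_four (hf : MemLp f 4 μ) : MemLp (fun ω ↦ f ω ^ 2) 2 μ := by
  refine (memLp_two_iff_integrable_sq (hf.1.pow 2)).2 ?_
  simpa [← pow_mul, Even.pow_abs (by decide : Even 4)] using
    hf.integrable_norm_pow (p := 4) (by norm_num)

lemma memLp_mul_of_indepFun {p : ℝ≥0∞} (hXY : IndepFun X Y μ) (hX : MemLp X p μ)
    (hY : MemLp Y p μ) : MemLp (X * Y) p μ := by
  rcases eq_or_ne p 0 with rfl | hp0
  · exact memLp_zero_iff_aestronglyMeasurable.2 (hX.1.mul hY.1)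
  rcases eq_or_ne p ∞ with rfl | hp
  · exact hY.mul hX
  rw [← integrable_norm_rpow_iff (hX.1.mul hY.1) hp0 hp]
  have hindep : IndepFun (fun ω ↦ ‖X ω‖ ^ p.toReal) (fun ω ↦ ‖Y ω‖ ^ p.toReal) μ :=
    hXY.comp (measurable_norm.pow_const _) (measurable_norm.pow_const _)
  refine (hindep.integrable_mul (hX.integrable_norm_rpow hp0 hp)
    (hY.integrable_norm_rpow hp0 hp)).congr (.of_forall fun ω ↦ ?_)
  simp [Real.mul_rpow]

lemma add_add_le_mul_add_sq {p K A B G H M X₂ X₄ : ℝ} (hp : 0 ≤ p) (hA : 0 ≤ A) (hB : 0 ≤ B)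
    (hX₂ : 0 ≤ X₂) (hH : 0 ≤ H) (hK : 16 ≤ K) (hX₄ : 3 * X₄ ≤ K * X₂ ^ 2)
    (hGA : G ≤ p * A ^ 2) (hHB : K * H ≤ p * B ^ 2) (hM : M ^ 2 ≤ G * H) :
    G + 8 * (X₂ * M) + 3 * (X₄ * H) ≤ p * (A + X₂ * B) ^ 2 := by
  have hM_le : 4 * M ≤ p * (A * B) := by
    refine le_of_sq_le_sq ?_ (by positivity)
    calc (4 * M) ^ 2 = 16 * M ^ 2 := by ring
      _ ≤ K * (G * H) := by gcongr
      _ = G * (K * H) := by ring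
      _ ≤ (p * A ^ 2) * (p * B ^ 2) := by gcongr
      _ = (p * (A * B)) ^ 2 := by ring
  have hX₄_le : 3 * (X₄ * H) ≤ p * (X₂ * B) ^ 2 :=
    calc 3 * (X₄ * H) = (3 * X₄) * H := by ring
      _ ≤ K * X₂ ^ 2 * H := by gcongr
      _ = X₂ ^ 2 * (K * H) := by ring
      _ ≤ X₂ ^ 2 * (p * B ^ 2) := by gcongr
      _ = p * (X₂ * B) ^ 2 := by ring
  calc G + 8 * (X₂ * M) + 3 * (X₄ * H)
    _ = G + 2 * X₂ * (4 * M) + 3 * (X₄ * H) := by ring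
    _ ≤ p * A ^ 2 + 2 * X₂ * (p * (A * B)) + p * (X₂ * B) ^ 2 := by gcongr
    _ = p * (A + X₂ * B) ^ 2 := by ring

section IndependentCoefficients

variable (hindep : IndepFun X (fun ω ↦ (g ω, h ω)) μ)
include hindep

lemma integral_pow_mul_pow_mul_pow_of_indepFun (hX : AEMeasurable X μ) (hg : AEMeasurable g μ)
    (hh : AEMeasurable h μ) (k a b : ℕ) :
    ∫ ω, X ω ^ k * (g ω ^ a * h ω ^ b) ∂μ = (∫ ω, X ω ^ k ∂μ) * ∫ ω, g ω ^ a * h ω ^ b ∂μ :=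
  hindep.integral_fun_comp_mul_comp (f := (· ^ k)) (g := fun y ↦ y.1 ^ a * y.2 ^ b) hX
    (hg.prodMk hh) (by fun_prop) (by fun_prop)

variable [IsFiniteMeasure μ]

lemma integrable_pow_mul_pow_mul_pow_of_indepFun {n k a b : ℕ} (hX : MemLp X n μ)
    (hg : MemLp g n μ) (hh : MemLp h n μ) (hk : k ≤ n) (hab : a + b ≤ n) :
    Integrable (fun ω ↦ X ω ^ k * (g ω ^ a * h ω ^ b)) μ := by
  have hindep' : IndepFun (fun ω ↦ X ω ^ k) (fun ω ↦ g ω ^ a * h ω ^ b) μ :=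
    hindep.comp (φ := (· ^ k)) (ψ := fun y : ℝ × ℝ ↦ y.1 ^ a * y.2 ^ b) (by fun_prop)
      (by fun_prop)
  refine hindep'.integrable_mul ?_ (integrable_pow_mul_pow hg hh hab)
  simpa using integrable_pow_mul_pow (b := 0) hX hX hk

lemma integral_add_mul_sq_of_indepFun (hX : MemLp X 2 μ) (hg : MemLp g 2 μ) (hh : MemLp h 2 μ)
    (hmean : ∫ ω, X ω ∂μ = 0) :
    ∫ ω, (g ω + X ω * h ω) ^ 2 ∂μ =
      ∫ ω, g ω ^ 2 ∂μ + (∫ ω, X ω ^ 2 ∂μ) * ∫ ω, h ω ^ 2 ∂μ := by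
  have hint (k a b : ℕ) (hk : k ≤ 2) (hab : a + b ≤ 2) :=
    integrable_pow_mul_pow_mul_pow_of_indepFun hindep hX hg hh hk hab
  have hmul := integral_pow_mul_pow_mul_pow_of_indepFun hindep hX.1.aemeasurable
    hg.1.aemeasurable hh.1.aemeasurable
  have hg2 : Integrable (fun ω ↦ g ω ^ 2) μ := hg.integrable_sq
  have hXgh : Integrable (fun ω ↦ X ω * (g ω * h ω)) μ := by simpa using hint 1 1 1
  have hXh2 : Integrable (fun ω ↦ X ω ^ 2 * h ω ^ 2) μ := by simpa using hint 2 0 2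
  have hXgh_zero : ∫ ω, X ω * (g ω * h ω) ∂μ = 0 := by simpa [hmean] using hmul 1 1 1
  calc ∫ ω, (g ω + X ω * h ω) ^ 2 ∂μ
    _ = ∫ ω, (g ω ^ 2 + 2 * (X ω * (g ω * h ω)) + X ω ^ 2 * h ω ^ 2) ∂μ := by
      congr with ω; ring
    _ = ∫ ω, g ω ^ 2 ∂μ + 2 * ∫ ω, X ω * (g ω * h ω) ∂μ + ∫ ω, X ω ^ 2 * h ω ^ 2 ∂μ := by
      rw [integral_add (by fun_prop) hXh2, integral_add hg2 (by fun_prop), integral_const_mul]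
    _ = ∫ ω, g ω ^ 2 ∂μ + (∫ ω, X ω ^ 2 ∂μ) * ∫ ω, h ω ^ 2 ∂μ := by
      rw [hXgh_zero, mul_zero, add_zero]
      simpa using hmul 2 0 2

lemma integral_add_mul_pow_four_le_of_indepFun (hX : MemLp X 4 μ) (hg : MemLp g 4 μ)
    (hh : MemLp h 4 μ) (hmean : ∫ ω, X ω ∂μ = 0) :
    ∫ ω, (g ω + X ω * h ω) ^ 4 ∂μ ≤
      ∫ ω, g ω ^ 4 ∂μ + 8 * ((∫ ω, X ω ^ 2 ∂μ) * ∫ ω, g ω ^ 2 * h ω ^ 2 ∂μ) +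
        3 * ((∫ ω, X ω ^ 4 ∂μ) * ∫ ω, h ω ^ 4 ∂μ) := by
  have hint (k a b : ℕ) (hk : k ≤ 4) (hab : a + b ≤ 4) :=
    integrable_pow_mul_pow_mul_pow_of_indepFun hindep hX hg hh hk hab
  have hmul := integral_pow_mul_pow_mul_pow_of_indepFun hindep hX.1.aemeasurable
    hg.1.aemeasurable hh.1.aemeasurable
  have hg4 : Integrable (fun ω ↦ g ω ^ 4) μ := by
    simpa using integrable_pow_mul_pow (a := 4) (b := 0) hg hg le_rfl
  have hXg3h : Integrable (fun ω ↦ X ω * (g ω ^ 3 * h ω)) μ := by simpa using hint 1 3 1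
  have hX2g2h2 : Integrable (fun ω ↦ X ω ^ 2 * (g ω ^ 2 * h ω ^ 2)) μ := by simpa using hint 2 2 2
  have hX4h4 : Integrable (fun ω ↦ X ω ^ 4 * h ω ^ 4) μ := by simpa using hint 4 0 4
  have hXg3h_zero : ∫ ω, X ω * (g ω ^ 3 * h ω) ∂μ = 0 := by simpa [hmean] using hmul 1 3 1
  calc ∫ ω, (g ω + X ω * h ω) ^ 4 ∂μ
    _ ≤ ∫ ω, (g ω ^ 4 + 4 * (X ω * (g ω ^ 3 * h ω)) + 8 * (X ω ^ 2 * (g ω ^ 2 * h ω ^ 2)) +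
          3 * (X ω ^ 4 * h ω ^ 4)) ∂μ := by
      refine integral_mono_of_nonneg (.of_forall fun ω ↦ by positivity) (by fun_prop)
        (.of_forall fun ω ↦ ?_)
      -- AM-GM: `4 X³ g h³ ≤ 2 X² g² h² + 2 X⁴ h⁴`
      nlinarith only [sq_nonneg (X ω * h ω * (g ω - X ω * h ω))]
    _ = ∫ ω, g ω ^ 4 ∂μ + 4 * ∫ ω, X ω * (g ω ^ 3 * h ω) ∂μ +
          8 * ∫ ω, X ω ^ 2 * (g ω ^ 2 * h ω ^ 2) ∂μ + 3 * ∫ ω, X ω ^ 4 * h ω ^ 4 ∂μ := by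
      rw [integral_add (by fun_prop) (by fun_prop), integral_add (by fun_prop) (by fun_prop),
        integral_add hg4 (by fun_prop)]
      simp only [integral_const_mul]
    _ = _ := by
      have hX4h4_eq : ∫ ω, X ω ^ 4 * h ω ^ 4 ∂μ = (∫ ω, X ω ^ 4 ∂μ) * ∫ ω, h ω ^ 4 ∂μ := by
        simpa using hmul 4 0 4
      rw [hXg3h_zero, hmul 2 2 2, hX4h4_eq, mul_zero, add_zero]

/-- One step of the induction on the number of variables: `p` stands for `K ^ d`. -/
lemma integral_add_mul_pow_four_le_mul_sq_of_indepFun {K p : ℝ} (hX : MemLp X 4 μ)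
    (hg : MemLp g 4 μ) (hh : MemLp h 4 μ) (hmean : ∫ ω, X ω ∂μ = 0) (hK : 16 ≤ K)
    (hkurt : 3 * ∫ ω, X ω ^ 4 ∂μ ≤ K * (∫ ω, X ω ^ 2 ∂μ) ^ 2) (hp : 0 ≤ p)
    (hg_le : ∫ ω, g ω ^ 4 ∂μ ≤ p * (∫ ω, g ω ^ 2 ∂μ) ^ 2)
    (hh_le : K * ∫ ω, h ω ^ 4 ∂μ ≤ p * (∫ ω, h ω ^ 2 ∂μ) ^ 2) :
    ∫ ω, (g ω + X ω * h ω) ^ 4 ∂μ ≤ p * (∫ ω, (g ω + X ω * h ω) ^ 2 ∂μ) ^ 2 := by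
  have cauchy_schwarz : (∫ ω, g ω ^ 2 * h ω ^ 2 ∂μ) ^ 2 ≤
      (∫ ω, g ω ^ 4 ∂μ) * ∫ ω, h ω ^ 4 ∂μ := by
    simpa only [← pow_mul] using sq_integral_mul_le_integral_sq_mul_integral_sq
      (memLp_two_sq_of_memLp_four hg) (memLp_two_sq_of_memLp_four hh)
  have two_le_four : (2 : ℝ≥0∞) ≤ 4 := by norm_num
  rw [integral_add_mul_sq_of_indepFun hindep (hX.mono_exponent two_le_four)
    (hg.mono_exponent two_le_four) (hh.mono_exponent two_le_four) hmean]
  exact (integral_add_mul_pow_four_le_of_indepFun hindep hX hg hh hmean).trans <|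
    add_add_le_mul_add_sq hp (integral_nonneg fun _ ↦ sq_nonneg _)
      (integral_nonneg fun _ ↦ sq_nonneg _) (integral_nonneg fun _ ↦ sq_nonneg _)
      (integral_nonneg fun _ ↦ by positivity) hK hkurt hg_le hh_le cauchy_schwarz

end IndependentCoefficients

end MomentInequalities

section MultilinearPolynomials

open ProbabilityTheory ENNReal

variable {ι R Ω : Type*}

/-- The multilinear polynomial `∑_{S ⊆ s} c_S ∏_{i ∈ S} x_i` with coefficients `c` in the variables
`x i`, `i ∈ s`. The coefficients of sets not contained in `s` are disregarded. -/
def multilinearPoly [CommSemiring R] (c : Finset ι → R) (s : Finset ι) (x : ι → R) : R :=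
  ∑ S ∈ s.powerset, c S * ∏ i ∈ S, x i

lemma multilinearPoly_insert [CommSemiring R] [DecidableEq ι] (c : Finset ι → R) {s : Finset ι}
    {i : ι} (hi : i ∉ s) (x : ι → R) :
    multilinearPoly c (insert i s) x =
      multilinearPoly c s x + x i * multilinearPoly (fun S ↦ c (insert i S)) s x := by
  rw [multilinearPoly, sum_powerset_insert hi, multilinearPoly, multilinearPoly, mul_sum]
  congr 1
  refine sum_congr rfl fun S hS ↦ ?_
  rw [prod_insert (notMem_mono (mem_powerset.1 hS) hi), mul_left_comm]

lemma dependsOn_multilinearPoly [CommSemiring R] (c : Finset ι → R) (s : Finset ι) :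
    DependsOn (multilinearPoly c s) s := fun _ _ hxy ↦
  sum_congr rfl fun _ hS ↦ congrArg _ <| prod_congr rfl fun i hi ↦ hxy i (mem_powerset.1 hS hi)

@[fun_prop]
lemma measurable_multilinearPoly (c : Finset ι → ℝ) (s : Finset ι) :
    Measurable (multilinearPoly c s) := by
  unfold multilinearPoly; fun_prop

variable [MeasurableSpace Ω] {μ : Measure Ω}

lemma indepFun_of_iIndepFun_of_dependsOn {E β : Type*} [Nonempty E] [MeasurableSpace E]
    [MeasurableSpace β] {X : ι → Ω → E} (hindep : iIndepFun X μ) (hX : ∀ i, AEMeasurable (X i) μ)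
    {s : Finset ι} {i : ι} (hi : i ∉ s) {F : (ι → E) → β} (hF : Measurable F)
    (hFs : DependsOn F s) : IndepFun (X i) (fun ω ↦ F (X · ω)) μ := by
  classical
  let extend (y : s → E) (j : ι) : E := if hj : j ∈ s then y ⟨j, hj⟩ else Classical.arbitrary E
  have measurable_extend : Measurable extend := by
    refine measurable_pi_lambda _ fun j ↦ ?_
    by_cases hj : j ∈ s <;> simp only [extend, hj, dite_true, dite_false] <;> fun_prop
  have eq_comp : (fun ω ↦ F (X · ω)) = (F ∘ extend) ∘ fun ω (j : s) ↦ X j ω := by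
    funext ω
    exact hFs fun j hj ↦ by simp [extend, mem_coe.1 hj]
  rw [eq_comp]
  exact (hindep.indepFun_finset₀ {i} s (disjoint_singleton_left.2 hi) hX).comp
    (measurable_pi_apply ⟨i, mem_singleton_self i⟩) (hF.comp measurable_extend)

variable {X : ι → Ω → ℝ}

lemma memLp_prod_of_iIndepFun {p : ℝ≥0∞} (hindep : iIndepFun X μ) (hX : ∀ i, MemLp (X i) p μ)
    (s : Finset ι) : MemLp (∏ i ∈ s, X i) p μ := by
  classical
  have := hindep.isProbabilityMeasure
  induction s using Finset.induction_on with
  | empty => exact memLp_const 1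
  | insert i s hi ih =>
    rw [prod_insert hi]
    exact memLp_mul_of_indepFun
      (hindep.indepFun_finsetProd_of_notMem₀ (fun j ↦ (hX j).1.aemeasurable) hi).symm (hX i) ih

lemma memLp_multilinearPoly {p : ℝ≥0∞} (hindep : iIndepFun X μ) (hX : ∀ i, MemLp (X i) p μ)
    (c : Finset ι → ℝ) (s : Finset ι) : MemLp (fun ω ↦ multilinearPoly c s (X · ω)) p μ := by
  refine memLp_finsetSum _ fun S _ ↦ MemLp.const_mul ?_ (c S)
  simpa only [prod_fn] using memLp_prod_of_iIndepFun hindep hX S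

theorem bonami_Zdist_general (hindep : iIndepFun X μ) (hX : ∀ i, MemLp (X i) 4 μ)
    (hmean : ∀ i, ∫ ω, X i ω ∂μ = 0) {K : ℝ} (hK : 16 ≤ K)
    (hkurt : ∀ i, 3 * ∫ ω, X i ω ^ 4 ∂μ ≤ K * (∫ ω, X i ω ^ 2 ∂μ) ^ 2)
    (c : Finset ι → ℝ) (s : Finset ι) (d : ℕ) (hdeg : ∀ S ⊆ s, d < #S → c S = 0) :
    ∫ ω, multilinearPoly c s (X · ω) ^ 4 ∂μ ≤
      K ^ d * (∫ ω, multilinearPoly c s (X · ω) ^ 2 ∂μ) ^ 2 := by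
  classical
  have := hindep.isProbabilityMeasure
  induction s using Finset.induction_on generalizing c d with
  | empty =>
    have one_le : 1 ≤ K ^ d := one_le_pow₀ (by linarith)
    simpa [multilinearPoly, ← pow_mul] using le_mul_of_one_le_left (by positivity) one_le
  | insert i s hi ih =>
    simp only [multilinearPoly_insert c hi]
    have hindep_i := indepFun_of_iIndepFun_of_dependsOn hindep (fun j ↦ (hX j).1.aemeasurable) hi
      (F := fun x ↦ (multilinearPoly c s x, multilinearPoly (fun S ↦ c (insert i S)) s x))
      (by fun_prop) fun x y hxy ↦ Prod.ext (dependsOn_multilinearPoly _ _ hxy)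
        (dependsOn_multilinearPoly _ _ hxy)
    refine integral_add_mul_pow_four_le_mul_sq_of_indepFun hindep_i (hX i)
      (memLp_multilinearPoly hindep hX _ s) (memLp_multilinearPoly hindep hX _ s) (hmean i) hK
      (hkurt i) (by positivity) (ih c d fun S hS ↦ hdeg S (hS.trans (subset_insert i s))) ?_
    have card_insert_of_subset {S : Finset ι} (hS : S ⊆ s) : #(insert i S) = #S + 1 :=
      card_insert_of_notMem (notMem_mono hS hi)
    cases d with
    | zero =>
      have eq_zero (x : ι → ℝ) : multilinearPoly (fun S ↦ c (insert i S)) s x = 0 :=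
        sum_eq_zero fun S hS ↦ by
          have hS := mem_powerset.1 hS
          exact mul_eq_zero_of_left
            (hdeg _ (insert_subset_insert i hS) (by simp [card_insert_of_subset hS])) _
      simp [eq_zero]
    | succ d =>
      rw [pow_succ', mul_assoc]
      gcongr
      exact ih _ d fun S hS hcard ↦ hdeg _ (insert_subset_insert i hS)
        (by simpa [card_insert_of_subset hS])

end MultilinearPolynomials

section Zdist

instance : IsProbabilityMeasure Zdist where
  measure_univ := by
    simp only [Zdist, Measure.add_apply, Measure.smul_apply, measure_univ, smul_eq_mul, mul_one]
    rw [← one_div, ENNReal.div_add_div_same, add_comm, three_add_one_eq_four,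
      ENNReal.div_self (by norm_num) (by norm_num)]

lemma integral_Zdist (f : ℝ → ℝ) : ∫ x, f x ∂Zdist = 1 / 4 * f 3 + 3 / 4 * f (-1) := by
  have hf (a : ℝ) : Integrable f (Measure.dirac a) := integrable_dirac (by simp)
  rw [Zdist, integral_add_measure ((hf 3).smul_measure (by simp))
    ((hf (-1)).smul_measure (ENNReal.div_ne_top (by simp) (by simp)))]
  simp [integral_smul_measure]

lemma memLp_id_Zdist (p : ENNReal) : MemLp id p Zdist := by
  refine .of_bound aestronglyMeasurable_id 3 ?_
  refine ae_add_measure_iff.2 ⟨Measure.ae_smul_measure ?_ _, Measure.ae_smul_measure ?_ _⟩ <;>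
    simp [ae_dirac_eq]

end Zdist

/-- Bonami-type inequality for multilinear polynomials of degree at most `d` in i.i.d.
`𝒵`-distributed random variables. -/
theorem bonami_Zdist (n d : ℕ) (c : Finset (Fin n) → ℝ)
    (hdeg : ∀ S : Finset (Fin n), d < S.card → c S = 0) :
    ∫ z, (∑ S : Finset (Fin n), c S * ∏ i ∈ S, z i) ^ 4
        ∂(Measure.pi fun _ : Fin n => Zdist) ≤
      81 ^ d * (∫ z, (∑ S : Finset (Fin n), c S * ∏ i ∈ S, z i) ^ 2
        ∂(Measure.pi fun _ : Fin n => Zdist)) ^ 2 := by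
  have moment (i : Fin n) (k : ℕ) :
      ∫ z, z i ^ k ∂(Measure.pi fun _ : Fin n ↦ Zdist) = 1 / 4 * 3 ^ k + 3 / 4 * (-1) ^ k := by
    rw [integral_comp_eval (μ := fun _ ↦ Zdist) (f := fun x : ℝ ↦ x ^ k) (by fun_prop),
      integral_Zdist]
  have h := bonami_Zdist_general (X := fun i (z : Fin n → ℝ) ↦ z i) (K := 81)
    (ProbabilityTheory.iIndepFun_pi fun _ ↦ aemeasurable_id)
    (fun i ↦ (memLp_id_Zdist 4).comp_measurePreserving (measurePreserving_eval _ i))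
    (fun i ↦ by simpa using (moment i 1).trans (by norm_num)) (by norm_num)
    (fun i ↦ by rw [moment, moment]; norm_num) c univ d (fun S _ ↦ hdeg S)
  simpa only [multilinearPoly, powerset_univ] using h

end
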